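/- Let p, q ≥ 1, let A_1,…,A_p, B_1,…,B_q be strictly positive and a_1,…,a_p, b_1,…,b_q be nonnegative reals, and set W(x) = ∏_{i=1}^p Γ(A_i x + a_i) / ∏_{j=1}^q Γ(B_j x + b_j) for x > 0, and P(u) = Σ_{i=1}^p e^{−a_i u/A_i}/(1 − e^{−u/A_i}) − Σ_{j=1}^q e^{−b_j u/B_j}/(1 − e^{−u/B_j}) for u > 0. Then (log W)′′ is completely monotonic on (0,∞) if and only if P(u) ≥ 0 for all u > 0; and in that case (log W)′′(x) = ∫_0^∞ e^{−xu} u P(u) du for all x > 0. -/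

import Mathlib

open MeasureTheory

/-- A function `f` is completely monotonic on `(0,∞)` if it is infinitely
differentiable there and `(-1)^n f^(n)(x) ≥ 0` for all `n ≥ 0` and `x > 0`. -/
def CompletelyMonotonicOn (f : ℝ → ℝ) : Prop :=
  (∀ x > (0 : ℝ), ContDiffAt ℝ (⊤ : ℕ∞) f x) ∧
    ∀ (n : ℕ), ∀ x > (0 : ℝ), 0 ≤ (-1 : ℝ) ^ n * iteratedDeriv n f x

/-! The trigamma function `(log Γ)''` is the Laplace transform of `t / (1 - e^{-t})`: both are
nonnegative solutions of `f (y + 1) - f y = -1 / y ^ 2`, so their difference is periodic, and it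
vanishes because the Laplace transform tends to `0` and `∫ t in y..y + 1, (log Γ)'' t = 1 / y`.
Rescaling and summing, `(log W)''` is the Laplace transform of `u P(u)`.

The `n`-th derivative of a Laplace transform `∫ e^{-xu} g(u) du` is `(-1)^n ∫ e^{-xu} u^n g(u) du`,
so it is completely monotonic when `g ≥ 0`. Conversely, the mass of `u^n e^{-(n+1)u/v}` concentrates
at `u = v` as `n → ∞`, so `g v < 0` would make one of these integrals negative. -/

open Set Filter Topology

section Laplace

variable {g : ℝ → ℝ} {x : ℝ}

/-- The Laplace transform `∫₀^∞ e^{-xu} g(u) du` of a function on `(0,∞)`; the values of `g` at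
`u ≤ 0` play no role. -/
noncomputable def laplaceTransform (g : ℝ → ℝ) (x : ℝ) : ℝ :=
  ∫ u in Ioi (0 : ℝ), Real.exp (-x * u) * g u

/-- Absolute convergence of the Laplace integral of `g` at every `x > 0`, the condition under which
`laplaceTransform g` is smooth on `(0,∞)`. -/
def LaplaceIntegrable (g : ℝ → ℝ) : Prop :=
  ∀ x > (0 : ℝ), IntegrableOn (fun u => Real.exp (-x * u) * g u) (Ioi 0)

lemma laplaceIntegrable_one : LaplaceIntegrable fun _ => 1 := fun x hx => by
  simpa using exp_neg_integrableOn_Ioi 0 hx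

namespace LaplaceIntegrable

lemma congr {f : ℝ → ℝ} (hf : LaplaceIntegrable f) (hfg : EqOn f g (Ioi 0)) :
    LaplaceIntegrable g := fun x hx =>
  (hf x hx).congr_fun (fun u hu => by simp only [hfg hu]) measurableSet_Ioi

lemma add {f : ℝ → ℝ} (hf : LaplaceIntegrable f) (hg : LaplaceIntegrable g) :
    LaplaceIntegrable fun u => f u + g u := fun x hx => by
  simpa only [mul_add] using! (hf x hx).add (hg x hx)

lemma const_mul (hg : LaplaceIntegrable g) (c : ℝ) : LaplaceIntegrable fun u => c * g u :=
  fun x hx => by simpa only [mul_left_comm] using! (hg x hx).const_mul c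

lemma sum {ι : Type*} {s : Finset ι} {f : ι → ℝ → ℝ} (hf : ∀ i ∈ s, LaplaceIntegrable (f i)) :
    LaplaceIntegrable fun u => ∑ i ∈ s, f i u := fun x hx => by
  simpa only [Finset.mul_sum] using! integrable_finsetSum s fun i hi => hf i hi x hx

lemma mono {f : ℝ → ℝ} (hf : LaplaceIntegrable f) (hg : ContinuousOn g (Ioi 0))
    (hgf : ∀ u > 0, |g u| ≤ f u) : LaplaceIntegrable g := fun x hx => by
  have hcont : ContinuousOn (fun u => Real.exp (-x * u) * g u) (Ioi 0) := by fun_prop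
  refine (hf x hx).mono' (hcont.aestronglyMeasurable measurableSet_Ioi) ?_
  filter_upwards [ae_restrict_mem measurableSet_Ioi] with u hu
  rw [norm_mul, Real.norm_of_nonneg (Real.exp_pos _).le, Real.norm_eq_abs]
  gcongr
  exact hgf u hu

lemma id_mul (hg : LaplaceIntegrable g) : LaplaceIntegrable fun u => u * g u := by
  intro x hx
  have hbound : ∀ u > 0, ‖u * Real.exp (-(x / 2) * u)‖ ≤ 2 / x := by
    intro u hu
    have hexp : x / 2 * u ≤ Real.exp (x / 2 * u) := by
      linarith [Real.add_one_le_exp (x / 2 * u)]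
    rw [Real.norm_of_nonneg (by positivity), neg_mul, Real.exp_neg, ← div_eq_mul_inv,
      div_le_div_iff₀ (Real.exp_pos _) hx]
    linarith
  have hint : IntegrableOn
      (fun u => u * Real.exp (-(x / 2) * u) * (Real.exp (-(x / 2) * u) * g u)) (Ioi 0) :=
    (hg (x / 2) (half_pos hx)).bdd_mul (by fun_prop)
      ((ae_restrict_mem measurableSet_Ioi).mono hbound)
  refine hint.congr_fun (fun u _ => ?_) measurableSet_Ioi
  have hsplit : Real.exp (-x * u) = Real.exp (-(x / 2) * u) * Real.exp (-(x / 2) * u) := by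
    rw [← Real.exp_add]; ring_nf
  simp only [hsplit]
  ring

lemma pow_mul (hg : LaplaceIntegrable g) (n : ℕ) : LaplaceIntegrable fun u => u ^ n * g u := by
  induction n with
  | zero => simpa using hg
  | succ n ih => simpa only [pow_succ', mul_assoc] using ih.id_mul

lemma exp_mul (hg : LaplaceIntegrable g) {a : ℝ} (ha : 0 ≤ a) :
    LaplaceIntegrable fun u => Real.exp (-a * u) * g u := fun x hx => by
  have hint := hg (x + a) (by positivity)
  simp only [neg_add, add_mul, Real.exp_add] at hint
  simpa only [mul_assoc] using hint

lemma comp_div (hg : LaplaceIntegrable g) {A : ℝ} (hA : 0 < A) :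
    LaplaceIntegrable fun u => g (u / A) := fun x hx => by
  have hint := (integrableOn_Ioi_comp_mul_left_iff _ 0 (inv_pos.2 hA)).2
    (by simpa using hg (A * x) (by positivity))
  refine hint.congr_fun (fun u _ => ?_) measurableSet_Ioi
  simp only [inv_mul_eq_div]
  congr 2
  field_simp

end LaplaceIntegrable

lemma laplaceTransform_congr {f : ℝ → ℝ} (hfg : EqOn f g (Ioi 0)) :
    laplaceTransform f = laplaceTransform g :=
  funext fun _ => setIntegral_congr_fun measurableSet_Ioi fun u hu => by simp only [hfg hu]

lemma laplaceTransform_nonneg (hg : ∀ u > 0, 0 ≤ g u) (x : ℝ) : 0 ≤ laplaceTransform g x :=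
  setIntegral_nonneg measurableSet_Ioi fun u hu => mul_nonneg (Real.exp_pos _).le (hg u hu)

lemma laplaceTransform_const_mul (c : ℝ) (g : ℝ → ℝ) (x : ℝ) :
    laplaceTransform (fun u => c * g u) x = c * laplaceTransform g x := by
  simp only [laplaceTransform, mul_left_comm _ c, integral_const_mul]

lemma laplaceTransform_sum {ι : Type*} {s : Finset ι} {f : ι → ℝ → ℝ}
    (hf : ∀ i ∈ s, LaplaceIntegrable (f i)) (hx : 0 < x) :
    laplaceTransform (fun u => ∑ i ∈ s, f i u) x = ∑ i ∈ s, laplaceTransform (f i) x := by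
  simp only [laplaceTransform, Finset.mul_sum]
  exact integral_finsetSum s fun i hi => hf i hi x hx

lemma laplaceTransform_sub {f : ℝ → ℝ} (hf : LaplaceIntegrable f) (hg : LaplaceIntegrable g)
    (hx : 0 < x) :
    laplaceTransform (fun u => f u - g u) x = laplaceTransform f x - laplaceTransform g x := by
  simp only [laplaceTransform, mul_sub]
  exact integral_sub (hf x hx) (hg x hx)

lemma laplaceTransform_exp_mul (a : ℝ) (g : ℝ → ℝ) (x : ℝ) :
    laplaceTransform (fun u => Real.exp (-a * u) * g u) x = laplaceTransform g (x + a) := by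
  simp only [laplaceTransform, neg_add, add_mul, Real.exp_add, mul_assoc]

lemma laplaceTransform_comp_div {A : ℝ} (hA : 0 < A) (g : ℝ → ℝ) (x : ℝ) :
    laplaceTransform (fun u => g (u / A)) x = A * laplaceTransform g (A * x) := by
  have hscale := integral_comp_mul_left_Ioi
    (fun t => Real.exp (-(A * x) * t) * g t) 0 (inv_pos.2 hA)
  rw [mul_zero, inv_inv, smul_eq_mul] at hscale
  refine Eq.trans (setIntegral_congr_fun measurableSet_Ioi fun u _ => ?_) hscale
  simp only [inv_mul_eq_div]
  congr 2
  field_simp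

lemma laplaceTransform_id (hx : 0 < x) : laplaceTransform (fun u => u) x = 1 / x ^ 2 := by
  have h := Real.integral_rpow_mul_exp_neg_mul_Ioi two_pos hx
  norm_num [Real.Gamma_two, Real.rpow_two] at h
  simpa [laplaceTransform, mul_comm] using h

lemma hasDerivAt_laplaceTransform (hg : LaplaceIntegrable g) (hx : 0 < x) :
    HasDerivAt (laplaceTransform g) (-laplaceTransform (fun u => u * g u) x) x := by
  have hmeas : ∀ y > 0, AEStronglyMeasurable (fun u => Real.exp (-y * u) * g u)
      (volume.restrict (Ioi 0)) := fun y hy => (hg y hy).aestronglyMeasurable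
  rw [laplaceTransform, ← integral_neg]
  refine (hasDerivAt_integral_of_dominated_loc_of_deriv_le (Ioi_mem_nhds (half_lt_self hx))
    (Filter.Eventually.mono (Ioi_mem_nhds hx) hmeas) (hg x hx)
    (F' := fun y u => -(Real.exp (-y * u) * (u * g u)))
    (hg.id_mul x hx).aestronglyMeasurable.neg ?_ (hg.id_mul (x / 2) (half_pos hx)).norm ?_).2
  · filter_upwards [ae_restrict_mem measurableSet_Ioi] with u (hu : 0 < u) y (hy : x / 2 < y)
    simp only [norm_neg, norm_mul, Real.norm_eq_abs, Real.abs_exp]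
    gcongr
  · filter_upwards with u y _
    have hlin : HasDerivAt (fun y : ℝ => -y * u) (-u) y := by
      simpa using (hasDerivAt_id y).neg.mul_const u
    exact (hlin.exp.mul_const (g u)).congr_deriv (by ring)

lemma iteratedDeriv_laplaceTransform (hg : LaplaceIntegrable g) (n : ℕ) (hx : 0 < x) :
    iteratedDeriv n (laplaceTransform g) x =
      (-1) ^ n * laplaceTransform (fun u => u ^ n * g u) x := by
  induction n generalizing x with
  | zero => simp
  | succ n ih =>
    have hev : iteratedDeriv n (laplaceTransform g) =ᶠ[𝓝 x]
        fun y => (-1) ^ n * laplaceTransform (fun u => u ^ n * g u) y :=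
      Filter.Eventually.mono (Ioi_mem_nhds hx) fun y hy => ih hy
    rw [iteratedDeriv_succ, hev.deriv_eq,
      ((hasDerivAt_laplaceTransform (hg.pow_mul n) hx).const_mul _).deriv]
    simp only [pow_succ', mul_assoc]
    ring

lemma contDiffOn_laplaceTransform (hg : LaplaceIntegrable g) :
    ContDiffOn ℝ (⊤ : ℕ∞) (laplaceTransform g) (Ioi 0) := by
  refine contDiffOn_of_differentiableOn_deriv fun n _ => ?_
  have hdiff : DifferentiableOn ℝ
      (fun x => (-1) ^ n * laplaceTransform (fun u => u ^ n * g u) x) (Ioi 0) := fun x hx =>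
    ((hasDerivAt_laplaceTransform (hg.pow_mul n)
      hx).differentiableAt.const_mul _).differentiableWithinAt
  exact hdiff.congr fun x hx => (iteratedDerivWithin_of_isOpen isOpen_Ioi hx).trans
    (iteratedDeriv_laplaceTransform hg n hx)

lemma tendsto_laplaceTransform_atTop (hg : LaplaceIntegrable g) :
    Tendsto (laplaceTransform g) atTop (𝓝 0) := by
  have hdom : Tendsto (laplaceTransform g) atTop (𝓝 (∫ _ in Ioi (0 : ℝ), (0 : ℝ))) := by
    refine tendsto_integral_filter_of_dominated_convergence
      (fun u => ‖Real.exp (-1 * u) * g u‖) ?_ ?_ (hg 1 one_pos).norm ?_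
    · filter_upwards [eventually_gt_atTop 0] with x hx using (hg x hx).aestronglyMeasurable
    · filter_upwards [eventually_ge_atTop 1] with x hx
      filter_upwards [ae_restrict_mem measurableSet_Ioi] with u (hu : 0 < u)
      simp only [norm_mul, Real.norm_eq_abs, Real.abs_exp]
      gcongr
    · filter_upwards [ae_restrict_mem measurableSet_Ioi] with u (hu : 0 < u)
      have hexp : Tendsto (fun x => Real.exp (-x * u)) atTop (𝓝 0) :=
        Real.tendsto_exp_atBot.comp (tendsto_neg_atTop_atBot.atBot_mul_const hu)
      simpa using hexp.mul_const (g u)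
  simpa using hdom

end Laplace

section Inversion

lemma exists_setIntegral_pow_mul_neg {α : Type*} [MeasurableSpace α] {μ : Measure α}
    {S U V : Set α} {ψ g : α → ℝ} {r s c : ℝ} (hS : MeasurableSet S) (hV : MeasurableSet V)
    (hVS : V ⊆ S) (hVU : V ⊆ U) (hV₀ : μ V ≠ 0) (hV₁ : μ V ≠ ⊤)
    (hint : ∀ n : ℕ, IntegrableOn (fun x => ψ x ^ n * g x) S μ) (hψ : ∀ x ∈ S, 0 ≤ ψ x)
    (hr : 0 ≤ r) (hrs : r < s) (hc : 0 < c) (hψr : ∀ x ∈ S \ U, ψ x ≤ r)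
    (hψs : ∀ x ∈ V, s ≤ ψ x) (hg : ∀ x ∈ U, g x ≤ -c) :
    ∃ n : ℕ, ∫ x in S, ψ x ^ n * g x ∂μ < 0 := by
  have hgint : IntegrableOn g S μ := by simpa using hint 0
  have hs : 0 < s := hr.trans_lt hrs
  have hbound (n : ℕ) : ∀ x ∈ S,
      ψ x ^ n * g x ≤ r ^ n * |g x| - V.indicator (fun _ => c * s ^ n) x := by
    intro x hx
    have hrg : 0 ≤ r ^ n * |g x| := by positivity
    have hψn : 0 ≤ ψ x ^ n := pow_nonneg (hψ x hx) n
    by_cases hxV : x ∈ V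
    · rw [indicator_of_mem hxV]
      have hpow : s ^ n ≤ ψ x ^ n := pow_le_pow_left₀ hs.le (hψs x hxV) n
      nlinarith [hg x (hVU hxV)]
    rw [indicator_of_notMem hxV, sub_zero]
    by_cases hxU : x ∈ U
    · nlinarith [hg x hxU]
    · calc ψ x ^ n * g x ≤ ψ x ^ n * |g x| := by gcongr; exact le_abs_self _
        _ ≤ r ^ n * |g x| := by gcongr; exacts [hψ x hx, hψr x ⟨hx, hxU⟩]
  have hle (n : ℕ) : ∫ x in S, ψ x ^ n * g x ∂μ ≤
      r ^ n * (∫ x in S, |g x| ∂μ) - c * s ^ n * μ.real V := by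
    have hind : IntegrableOn (V.indicator fun _ => c * s ^ n) S μ :=
      ((integrable_indicator_iff hV).2 (integrableOn_const hV₁)).integrableOn
    refine (setIntegral_mono_on (hint n) ((hgint.abs.const_mul _).sub hind) hS (hbound n)).trans ?_
    rw [integral_sub' (hgint.abs.const_mul _) hind, integral_const_mul, setIntegral_indicator hV,
      inter_eq_self_of_subset_right hVS, setIntegral_const, smul_eq_mul, mul_comm (μ.real V)]
  have hlim : Tendsto (fun n : ℕ => (r / s) ^ n * ∫ x in S, |g x| ∂μ) atTop (𝓝 0) := by
    simpa using (tendsto_pow_atTop_nhds_zero_of_lt_one (by positivity)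
      ((div_lt_one hs).2 hrs)).mul_const (∫ x in S, |g x| ∂μ)
  have hVpos : 0 < c * μ.real V := mul_pos hc (ENNReal.toReal_pos hV₀ hV₁)
  obtain ⟨n, hn⟩ := (hlim.eventually_lt_const hVpos).exists
  refine ⟨n, (hle n).trans_lt (sub_neg.2 ?_)⟩
  rw [div_pow, div_mul_eq_mul_div, div_lt_iff₀ (by positivity)] at hn
  linarith

lemma hasDerivAt_mul_exp_neg (t : ℝ) :
    HasDerivAt (fun t : ℝ => t * Real.exp (-t)) ((1 - t) * Real.exp (-t)) t :=
  ((hasDerivAt_id t).mul (hasDerivAt_neg t).exp).congr_deriv (by simp; ring)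

lemma strictMonoOn_mul_exp_neg : StrictMonoOn (fun t : ℝ => t * Real.exp (-t)) (Iic 1) :=
  strictMonoOn_of_deriv_pos (convex_Iic 1) (by fun_prop) fun t ht => by
    rw [interior_Iic, mem_Iio] at ht
    rw [(hasDerivAt_mul_exp_neg t).deriv]
    exact mul_pos (sub_pos.2 ht) (Real.exp_pos _)

lemma strictAntiOn_mul_exp_neg : StrictAntiOn (fun t : ℝ => t * Real.exp (-t)) (Ici 1) :=
  strictAntiOn_of_deriv_neg (convex_Ici 1) (by fun_prop) fun t ht => by
    rw [interior_Ici, mem_Ioi] at ht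
    rw [(hasDerivAt_mul_exp_neg t).deriv]
    exact mul_neg_of_neg_of_pos (sub_neg.2 ht) (Real.exp_pos _)

lemma exists_forall_mul_exp_neg_le {U : Set ℝ} (hU : U ∈ 𝓝 1) :
    ∃ r ≥ 0, r < Real.exp (-1) ∧ ∀ t ∉ U, t * Real.exp (-t) ≤ r := by
  obtain ⟨a, b, ⟨ha, hb⟩, hab⟩ := mem_nhds_iff_exists_Ioo_subset.1 hU
  refine ⟨max (a * Real.exp (-a)) (b * Real.exp (-b)), le_max_of_le_right (by positivity),
    max_lt ?_ ?_, fun t ht => ?_⟩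
  · simpa using strictMonoOn_mul_exp_neg ha.le self_mem_Iic ha
  · simpa using strictAntiOn_mul_exp_neg self_mem_Ici hb.le hb
  rcases le_or_gt t a with hta | hat
  · exact le_max_of_le_left
      (strictMonoOn_mul_exp_neg.monotoneOn (hta.trans ha.le) ha.le hta)
  · have hbt : b ≤ t := not_lt.1 fun htb => ht (hab ⟨hat, htb⟩)
    exact le_max_of_le_right
      (strictAntiOn_mul_exp_neg.antitoneOn hb.le (hb.le.trans hbt) hbt)

lemma pow_mul_exp_neg_mul_eq (v u w : ℝ) (n : ℕ) :
    (u / v * Real.exp (-(u / v))) ^ n * (Real.exp (-(u / v)) * w) =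
      (v ^ n)⁻¹ * (Real.exp (-((n + 1) / v) * u) * (u ^ n * w)) := by
  have hexp : Real.exp (-((n + 1) / v) * u) = Real.exp (-(u / v)) ^ n * Real.exp (-(u / v)) := by
    rw [← pow_succ, ← Real.exp_nat_mul]
    push_cast
    ring_nf
  rw [hexp, mul_pow, div_pow]
  ring

lemma nonneg_of_forall_laplaceTransform_pow_mul_nonneg {g : ℝ → ℝ} {v : ℝ}
    (hg : LaplaceIntegrable g) (hv : 0 < v) (hgv : ContinuousAt g v)
    (h : ∀ n : ℕ, ∀ x > 0, 0 ≤ laplaceTransform (fun u => u ^ n * g u) x) : 0 ≤ g v := by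
  by_contra! hneg
  set ψ : ℝ → ℝ := fun u => u / v * Real.exp (-(u / v))
  set f : ℝ → ℝ := fun u => Real.exp (-(u / v)) * g u
  have hψf (n : ℕ) (u : ℝ) : ψ u ^ n * f u =
      (v ^ n)⁻¹ * (Real.exp (-((n + 1) / v) * u) * (u ^ n * g u)) :=
    pow_mul_exp_neg_mul_eq v u (g u) n
  have hf : ContinuousAt f v := by fun_prop
  have hfv : f v < 0 := mul_neg_of_pos_of_neg (Real.exp_pos _) hneg
  obtain ⟨c, hfc, hc⟩ := exists_between hfv
  have hU : (fun t => v * t) ⁻¹' {u | f u < c} ∈ 𝓝 1 :=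
    ContinuousAt.preimage_mem_nhds (by fun_prop) <| by
      simpa only [mul_one] using! hf.eventually_lt continuousAt_const hfc
  obtain ⟨r, hr, hr1, hout⟩ := exists_forall_mul_exp_neg_le hU
  obtain ⟨s, hrs, hs⟩ := exists_between hr1
  have hVnhds : ∀ᶠ u in 𝓝 v, f u < c ∧ s < ψ u ∧ 0 < u := by
    have hψ : ContinuousAt ψ v := by fun_prop
    have hψv : s < ψ v := by simpa [ψ, hv.ne'] using hs
    exact (hf.eventually_lt continuousAt_const hfc).and
      ((continuousAt_const.eventually_lt hψ hψv).and (Ioi_mem_nhds hv))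
  obtain ⟨a, b, ⟨hav, hvb⟩, hab⟩ := mem_nhds_iff_exists_Ioo_subset.1 hVnhds
  obtain ⟨n, hn⟩ := exists_setIntegral_pow_mul_neg (μ := volume) (S := Ioi 0) (V := Ioo a b)
    (U := {u | f u < c}) (ψ := ψ) (g := f) measurableSet_Ioi measurableSet_Ioo
    (fun u hu => (hab hu).2.2) (fun u hu => (hab hu).1) (by simp [hav.trans hvb]) (by simp)
    (fun n => by simpa only [hψf] using! ((hg.pow_mul n) _ (by positivity)).const_mul _)
    (fun u hu => by have : 0 < u := hu; positivity) hr hrs (neg_pos.2 hc)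
    (fun u hu => hout (u / v) (by simpa [mul_div_cancel₀ _ hv.ne'] using hu.2))
    (fun u hu => (hab hu).2.1.le) (fun u hu => by simpa using le_of_lt hu)
  simp only [hψf, integral_const_mul] at hn
  exact hn.not_ge (mul_nonneg (by positivity) (h n ((n + 1) / v) (by positivity)))

end Inversion

section CompletelyMonotonic

lemma CompletelyMonotonicOn.congr {f g : ℝ → ℝ} (hf : CompletelyMonotonicOn f)
    (hfg : EqOn f g (Ioi 0)) : CompletelyMonotonicOn g := by
  have hev : ∀ x > 0, f =ᶠ[𝓝 x] g := fun x hx => hfg.eventuallyEq_of_mem (Ioi_mem_nhds hx)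
  exact ⟨fun x hx => (hf.1 x hx).congr_of_eventuallyEq (hev x hx).symm, fun n x hx =>
    (hev x hx).iteratedDeriv_eq n ▸ hf.2 n x hx⟩

theorem completelyMonotonicOn_laplaceTransform_iff {g : ℝ → ℝ} (hg : LaplaceIntegrable g)
    (hcont : ContinuousOn g (Ioi 0)) :
    CompletelyMonotonicOn (laplaceTransform g) ↔ ∀ u > 0, 0 ≤ g u := by
  have hsign (n : ℕ) {x : ℝ} (hx : 0 < x) : (-1) ^ n * iteratedDeriv n (laplaceTransform g) x =
      laplaceTransform (fun u => u ^ n * g u) x := by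
    rw [iteratedDeriv_laplaceTransform hg n hx, ← mul_assoc, ← mul_pow]
    norm_num
  constructor
  · intro h u hu
    exact nonneg_of_forall_laplaceTransform_pow_mul_nonneg hg hu
      (hcont.continuousAt (Ioi_mem_nhds hu)) fun n x hx => hsign n hx ▸ h.2 n x hx
  · intro h
    refine ⟨fun x hx => (contDiffOn_laplaceTransform hg).contDiffAt (Ioi_mem_nhds hx), ?_⟩
    intro n x hx
    rw [hsign n hx]
    exact laplaceTransform_nonneg (fun u hu => mul_nonneg (pow_nonneg hu.le n) (h u hu)) x

end CompletelyMonotonic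

section Periodic

variable {f g d : ℝ → ℝ}

lemma apply_add_natCast_of_apply_add_one (hd : ∀ y > 0, d (y + 1) = d y) (n : ℕ) {y : ℝ}
    (hy : 0 < y) : d (y + n) = d y := by
  induction n with
  | zero => simp
  | succ n ih => rw [Nat.cast_succ, ← add_assoc, hd (y + n) (by positivity), ih]

lemma tendsto_const_add_natCast_atTop (y : ℝ) : Tendsto (fun n : ℕ => y + n) atTop atTop :=
  tendsto_atTop_add_const_left _ y tendsto_natCast_atTop_atTop

lemma uIcc_add_one_subset_Ioi {y : ℝ} (hy : 0 < y) : uIcc y (y + 1) ⊆ Ioi 0 := by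
  rw [uIcc_of_le (by linarith)]
  exact fun t ht => hy.trans_le ht.1

lemma eqOn_of_sub_eq_sub_of_tendsto (hf : ContinuousOn f (Ioi 0)) (hg : ContinuousOn g (Ioi 0))
    (hf₀ : ∀ y > 0, 0 ≤ f y) (hg₀ : ∀ y > 0, 0 ≤ g y)
    (hfg : ∀ y > 0, f (y + 1) - f y = g (y + 1) - g y)
    (hflim : Tendsto (fun y => ∫ t in y..y + 1, f t) atTop (𝓝 0))
    (hglim : Tendsto g atTop (𝓝 0)) : EqOn f g (Ioi 0) := by
  set d : ℝ → ℝ := fun y => f y - g y with hd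
  have hdcont : ContinuousOn d (Ioi 0) := hf.sub hg
  have hper (n : ℕ) {y : ℝ} (hy : 0 < y) : d (y + n) = d y :=
    apply_add_natCast_of_apply_add_one (fun y hy => by simp only [hd]; linarith [hfg y hy]) n hy
  have hd₀ : ∀ y > 0, 0 ≤ d y := by
    intro y hy
    have hneg : Tendsto (fun n : ℕ => -g (y + n)) atTop (𝓝 0) := by
      simpa using! (hglim.comp (tendsto_const_add_natCast_atTop y)).neg
    refine le_of_tendsto' hneg fun n => ?_
    linarith [hper n hy, hf₀ (y + n) (by positivity)]
  intro y (hy : 0 < y)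
  have hint_le (n : ℕ) : ∫ t in y..y + 1, d t ≤ ∫ t in (y + n)..(y + n) + 1, f t := by
    have hsub := uIcc_add_one_subset_Ioi (y := y + n) (by positivity)
    calc ∫ t in y..y + 1, d t = ∫ t in y..y + 1, d (t + n) :=
          intervalIntegral.integral_congr fun t ht =>
            (hper n (uIcc_add_one_subset_Ioi hy ht)).symm
      _ = ∫ t in (y + n)..(y + n) + 1, d t := by
          rw [intervalIntegral.integral_comp_add_right, add_right_comm]
      _ ≤ ∫ t in (y + n)..(y + n) + 1, f t :=
          intervalIntegral.integral_mono_on (by linarith)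
            (hdcont.mono hsub).intervalIntegrable (hf.mono hsub).intervalIntegrable
            fun t ht => sub_le_self _ (hg₀ t (hsub (Icc_subset_uIcc ht)))
  have hint : ∫ t in y..y + 1, d t ≤ 0 :=
    ge_of_tendsto' (hflim.comp (tendsto_const_add_natCast_atTop y)) hint_le
  by_contra hne
  refine hint.not_gt (intervalIntegral.integral_pos (lt_add_one y)
    (hdcont.mono fun t ht => hy.trans_le ht.1) (fun t ht => hd₀ t (hy.trans ht.1))
    ⟨y, left_mem_Icc.2 (lt_add_one y).le, (hd₀ y hy).lt_of_ne' (sub_ne_zero.2 hne)⟩)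

end Periodic

section Trigamma

variable {y : ℝ}

/-- The logarithm of the gamma function, meant for positive arguments. -/
noncomputable def logGamma (y : ℝ) : ℝ := Real.log (Real.Gamma y)

/-- The trigamma function `(log Γ)''`, meant for positive arguments. -/
noncomputable def trigamma : ℝ → ℝ := deriv (deriv logGamma)

lemma contDiffAt_Gamma (hy : 0 < y) : ContDiffAt ℝ (⊤ : ℕ∞) Real.Gamma y := by
  have hdiff : DifferentiableOn ℂ Complex.Gamma {z | 0 < z.re} := by
    refine fun z (hz : 0 < z.re) => (Complex.differentiableAt_Gamma z ?_).differentiableWithinAt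
    rintro m rfl
    exact hz.not_ge (by simp)
  have hopen : IsOpen {z : ℂ | 0 < z.re} := isOpen_lt continuous_const Complex.continuous_re
  exact (hdiff.analyticAt (hopen.mem_nhds (by simpa using hy))).contDiffAt.real_of_complex

lemma contDiffAt_logGamma (hy : 0 < y) : ContDiffAt ℝ (⊤ : ℕ∞) logGamma y :=
  (contDiffAt_Gamma hy).log (Real.Gamma_pos_of_pos hy).ne'

lemma contDiffAt_deriv_logGamma (hy : 0 < y) : ContDiffAt ℝ (⊤ : ℕ∞) (deriv logGamma) y :=
  (contDiffAt_logGamma hy).derivWithin le_rfl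

lemma logGamma_add_one (hy : 0 < y) : logGamma (y + 1) = logGamma y + Real.log y := by
  rw [logGamma, Real.Gamma_add_one hy.ne', Real.log_mul hy.ne' (Real.Gamma_pos_of_pos hy).ne',
    add_comm, logGamma]

lemma deriv_logGamma_add_one (hy : 0 < y) :
    deriv logGamma (y + 1) = deriv logGamma y + y⁻¹ := by
  have hev : (fun t => logGamma (t + 1)) =ᶠ[𝓝 y] fun t => logGamma t + Real.log t := by
    filter_upwards [Ioi_mem_nhds hy] with t ht using logGamma_add_one ht
  rw [← deriv_comp_add_const, hev.deriv_eq,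
    deriv_fun_add ((contDiffAt_logGamma hy).differentiableAt (by simp))
      (Real.differentiableAt_log hy.ne'), Real.deriv_log]

lemma trigamma_add_one (hy : 0 < y) : trigamma (y + 1) = trigamma y - 1 / y ^ 2 := by
  have hev : (fun t => deriv logGamma (t + 1)) =ᶠ[𝓝 y] fun t => deriv logGamma t + t⁻¹ := by
    filter_upwards [Ioi_mem_nhds hy] with t ht using deriv_logGamma_add_one ht
  rw [trigamma, ← deriv_comp_add_const, hev.deriv_eq,
    deriv_fun_add ((contDiffAt_deriv_logGamma hy).differentiableAt (by simp))
      (differentiableAt_inv hy.ne'), deriv_inv, one_div, sub_eq_add_neg]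

lemma trigamma_nonneg (hy : 0 < y) : 0 ≤ trigamma y := by
  have hmono : MonotoneOn (deriv logGamma) (Ioi 0) :=
    Real.convexOn_log_Gamma.monotoneOn_deriv fun t ht =>
      (contDiffAt_logGamma ht).differentiableAt (by simp)
  rw [trigamma, ← derivWithin_of_isOpen isOpen_Ioi hy]
  exact hmono.derivWithin_nonneg

lemma continuousOn_trigamma : ContinuousOn trigamma (Ioi 0) := fun y hy =>
  ((contDiffAt_deriv_logGamma hy).derivWithin (m := 0) (by simp)).continuousAt.continuousWithinAt

lemma integral_trigamma_add_one (hy : 0 < y) : ∫ t in y..y + 1, trigamma t = y⁻¹ := by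
  have hsub := uIcc_add_one_subset_Ioi hy
  rw [trigamma, intervalIntegral.integral_deriv_eq_sub
      (fun t ht => (contDiffAt_deriv_logGamma (hsub ht)).differentiableAt (by simp))
      (continuousOn_trigamma.mono hsub).intervalIntegrable,
    deriv_logGamma_add_one hy, add_sub_cancel_left]

/-- The function `t / (1 - e^{-t})`, whose Laplace transform is the trigamma function. -/
noncomputable def trigammaKernel (t : ℝ) : ℝ := t / (1 - Real.exp (-t))

lemma one_sub_exp_neg_pos {t : ℝ} (ht : 0 < t) : 0 < 1 - Real.exp (-t) := by simpa

lemma trigammaKernel_nonneg {t : ℝ} (ht : 0 < t) : 0 ≤ trigammaKernel t :=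
  div_nonneg ht.le (one_sub_exp_neg_pos ht).le

lemma trigammaKernel_le {t : ℝ} (ht : 0 < t) : trigammaKernel t ≤ 1 + t := by
  rw [trigammaKernel, div_le_iff₀ (one_sub_exp_neg_pos ht)]
  have hexp : (1 + t) * Real.exp (-t) ≤ 1 := by
    rw [Real.exp_neg, ← div_eq_mul_inv, div_le_one (Real.exp_pos t)]
    linarith [Real.add_one_le_exp t]
  linarith

lemma continuousOn_trigammaKernel : ContinuousOn trigammaKernel (Ioi 0) := by
  unfold trigammaKernel
  exact continuousOn_id.div (by fun_prop) fun t ht => (one_sub_exp_neg_pos ht).ne'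

lemma laplaceIntegrable_trigammaKernel : LaplaceIntegrable trigammaKernel := by
  have hmajorant : LaplaceIntegrable fun t => 1 + t :=
    laplaceIntegrable_one.add (by simpa using laplaceIntegrable_one.id_mul)
  refine hmajorant.mono continuousOn_trigammaKernel fun t ht => ?_
  rw [abs_of_nonneg (trigammaKernel_nonneg ht)]
  exact trigammaKernel_le ht

lemma laplaceTransform_trigammaKernel_add_one (hy : 0 < y) :
    laplaceTransform trigammaKernel (y + 1) = laplaceTransform trigammaKernel y - 1 / y ^ 2 := by
  have hker : EqOn (fun t => trigammaKernel t - Real.exp (-1 * t) * trigammaKernel t)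
      (fun t => t) (Ioi 0) := fun t ht => by
    have := (one_sub_exp_neg_pos ht).ne'
    simp only [trigammaKernel, neg_one_mul]
    field_simp
  rw [← laplaceTransform_id hy, ← laplaceTransform_congr hker,
    laplaceTransform_sub laplaceIntegrable_trigammaKernel
      (laplaceIntegrable_trigammaKernel.exp_mul zero_le_one) hy,
    laplaceTransform_exp_mul, sub_sub_cancel]

theorem trigamma_eqOn_laplaceTransform :
    EqOn trigamma (laplaceTransform trigammaKernel) (Ioi 0) := by
  have hint : Tendsto (fun y => ∫ t in y..y + 1, trigamma t) atTop (𝓝 0) :=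
    tendsto_inv_atTop_zero.congr' <| by
      filter_upwards [eventually_gt_atTop 0] with y hy using (integral_trigamma_add_one hy).symm
  refine eqOn_of_sub_eq_sub_of_tendsto continuousOn_trigamma
    (contDiffOn_laplaceTransform laplaceIntegrable_trigammaKernel).continuousOn
    (fun y hy => trigamma_nonneg hy)
    (fun y _ => laplaceTransform_nonneg (fun t ht => trigammaKernel_nonneg ht) y)
    (fun y hy => ?_) hint (tendsto_laplaceTransform_atTop laplaceIntegrable_trigammaKernel)
  rw [trigamma_add_one hy, laplaceTransform_trigammaKernel_add_one hy]
  ring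

end Trigamma

section GammaProduct

/-- The function `u e^{-au/A} / (1 - e^{-u/A})`, whose Laplace transform is the second derivative of
`y ↦ log Γ(Ay + a)`. -/
noncomputable def gammaKernel (A a u : ℝ) : ℝ :=
  u * (Real.exp (-a * u / A) / (1 - Real.exp (-u / A)))

variable {A a x : ℝ}

lemma gammaKernel_eq (hA : 0 < A) (a u : ℝ) :
    gammaKernel A a u = A * (Real.exp (-(a / A) * u) * trigammaKernel (u / A)) := by
  simp only [gammaKernel, trigammaKernel, show -a * u / A = -(a / A) * u by ring, neg_div]
  field_simp

lemma continuousOn_gammaKernel (hA : 0 < A) (a : ℝ) : ContinuousOn (gammaKernel A a) (Ioi 0) := by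
  have hcomp : ContinuousOn (fun u => trigammaKernel (u / A)) (Ioi 0) :=
    continuousOn_trigammaKernel.comp (by fun_prop) fun u hu => div_pos hu hA
  rw [funext (gammaKernel_eq hA a)]
  fun_prop

lemma laplaceIntegrable_gammaKernel (hA : 0 < A) (ha : 0 ≤ a) :
    LaplaceIntegrable (gammaKernel A a) := by
  rw [funext (gammaKernel_eq hA a)]
  exact ((laplaceIntegrable_trigammaKernel.comp_div hA).exp_mul (by positivity)).const_mul A

lemma laplaceTransform_gammaKernel (hA : 0 < A) (ha : 0 ≤ a) (hx : 0 < x) :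
    laplaceTransform (gammaKernel A a) x = A ^ 2 * trigamma (A * x + a) := by
  rw [funext (gammaKernel_eq hA a), laplaceTransform_const_mul, laplaceTransform_exp_mul,
    laplaceTransform_comp_div hA, mul_add, mul_div_cancel₀ a hA.ne',
    trigamma_eqOn_laplaceTransform (by positivity : 0 < A * x + a)]
  ring

lemma contDiffAt_logGamma_comp (hA : 0 < A) (ha : 0 ≤ a) (hx : 0 < x) :
    ContDiffAt ℝ 2 (fun y => logGamma (A * y + a)) x :=
  (contDiffAt_infty.1 (contDiffAt_logGamma (by positivity)) 2).comp x (by fun_prop)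

lemma iteratedDeriv_two_logGamma_comp (A a x : ℝ) :
    iteratedDeriv 2 (fun y => logGamma (A * y + a)) x = A ^ 2 * trigamma (A * x + a) := by
  have hderiv : deriv (fun y => logGamma (A * y + a)) = fun y => A * deriv logGamma (A * y + a) :=
    funext fun y => by
      rw [deriv_comp_mul_left A (fun z => logGamma (z + a)), deriv_comp_add_const, smul_eq_mul]
  rw [iteratedDeriv_succ, iteratedDeriv_one, hderiv, deriv_const_mul_field,
    deriv_comp_mul_left A (fun z => deriv logGamma (z + a)), deriv_comp_add_const, smul_eq_mul,
    trigamma]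
  ring

variable {ι : Type*} [Fintype ι]

lemma log_prod_Gamma_rpow {A a : ι → ℝ} (c : ι → ℝ) (hA : ∀ i, 0 < A i) (ha : ∀ i, 0 ≤ a i)
    (hx : 0 < x) : Real.log (∏ i, Real.Gamma (A i * x + a i) ^ c i) =
      ∑ i, c i * logGamma (A i * x + a i) := by
  have hΓ (i : ι) : 0 < Real.Gamma (A i * x + a i) :=
    Real.Gamma_pos_of_pos (add_pos_of_pos_of_nonneg (mul_pos (hA i) hx) (ha i))
  rw [Real.log_prod fun i _ => (Real.rpow_pos_of_pos (hΓ i) _).ne']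
  exact Finset.sum_congr rfl fun i _ => Real.log_rpow (hΓ i) _

lemma deriv_deriv_log_prod_Gamma_rpow {A a : ι → ℝ} (c : ι → ℝ) (hA : ∀ i, 0 < A i)
    (ha : ∀ i, 0 ≤ a i) (hx : 0 < x) :
    deriv (deriv fun y => Real.log (∏ i, Real.Gamma (A i * y + a i) ^ c i)) x =
      laplaceTransform (fun u => ∑ i, c i * gammaKernel (A i) (a i) u) x := by
  have hev : (fun y => Real.log (∏ i, Real.Gamma (A i * y + a i) ^ c i)) =ᶠ[𝓝 x]
      fun y => ∑ i, c i * logGamma (A i * y + a i) := by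
    filter_upwards [Ioi_mem_nhds hx] with y hy using log_prod_Gamma_rpow c hA ha hy
  rw [hev.deriv.deriv_eq, ← iteratedDeriv_one, ← iteratedDeriv_succ', iteratedDeriv_fun_sum
      fun i _ => contDiffAt_const.mul (contDiffAt_logGamma_comp (hA i) (ha i) hx),
    laplaceTransform_sum
      (fun i _ => (laplaceIntegrable_gammaKernel (hA i) (ha i)).const_mul (c i)) hx]
  refine Finset.sum_congr rfl fun i _ => ?_
  rw [iteratedDeriv_const_mul_field, iteratedDeriv_two_logGamma_comp, laplaceTransform_const_mul,
    laplaceTransform_gammaKernel (hA i) (ha i) hx]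

theorem stmt6_general (A a c : ι → ℝ) (hA : ∀ i, 0 < A i) (ha : ∀ i, 0 ≤ a i) (W : ℝ → ℝ)
    (hW : ∀ x > 0, W x = ∏ i, Real.Gamma (A i * x + a i) ^ c i) (P : ℝ → ℝ)
    (hP : ∀ u > 0, P u = ∑ i, c i * (Real.exp (-a i * u / A i) / (1 - Real.exp (-u / A i)))) :
    (CompletelyMonotonicOn (deriv (deriv fun y => Real.log (W y))) ↔ ∀ u > 0, 0 ≤ P u) ∧
      ∀ x > 0, deriv (deriv fun y => Real.log (W y)) x =
        ∫ u in Ioi (0 : ℝ), Real.exp (-x * u) * u * P u := by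
  set K : ℝ → ℝ := fun u => ∑ i, c i * gammaKernel (A i) (a i) u
  have hKP : EqOn K (fun u => u * P u) (Ioi 0) := fun u hu => by
    simp only [K, gammaKernel, hP u hu, Finset.mul_sum, mul_left_comm u]
  have hK : LaplaceIntegrable K := .sum fun i _ =>
    (laplaceIntegrable_gammaKernel (hA i) (ha i)).const_mul (c i)
  have hKcont : ContinuousOn K (Ioi 0) := continuousOn_finsetSum _ fun i _ =>
    (continuousOn_gammaKernel (hA i) (a i)).const_mul (c i)
  have hderiv : EqOn (deriv (deriv fun y => Real.log (W y))) (laplaceTransform K) (Ioi 0) := by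
    intro x hx
    have hev : (fun y => Real.log (W y)) =ᶠ[𝓝 x]
        fun y => Real.log (∏ i, Real.Gamma (A i * y + a i) ^ c i) := by
      filter_upwards [Ioi_mem_nhds hx] with y hy
      rw [hW y hy]
    rw [hev.deriv.deriv_eq, deriv_deriv_log_prod_Gamma_rpow c hA ha hx]
  constructor
  · calc CompletelyMonotonicOn (deriv (deriv fun y => Real.log (W y)))
        ↔ CompletelyMonotonicOn (laplaceTransform K) := ⟨(·.congr hderiv), (·.congr hderiv.symm)⟩
      _ ↔ ∀ u > 0, 0 ≤ K u := completelyMonotonicOn_laplaceTransform_iff hK hKcont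
      _ ↔ ∀ u > 0, 0 ≤ P u := forall₂_congr fun u hu => by
          rw [hKP hu, mul_nonneg_iff_of_pos_left hu]
  · intro x hx
    rw [hderiv hx, laplaceTransform_congr hKP]
    simp only [laplaceTransform, mul_assoc]

end GammaProduct

theorem stmt6 (p q : ℕ) (hp : 1 ≤ p) (hq : 1 ≤ q)
    (A : Fin p → ℝ) (B : Fin q → ℝ) (a : Fin p → ℝ) (b : Fin q → ℝ)
    (hA : ∀ i, 0 < A i) (hB : ∀ j, 0 < B j)
    (ha : ∀ i, 0 ≤ a i) (hb : ∀ j, 0 ≤ b j)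
    (W : ℝ → ℝ)
    (hW : ∀ x, W x = (∏ i, Real.Gamma (A i * x + a i)) / ∏ j, Real.Gamma (B j * x + b j))
    (P : ℝ → ℝ)
    (hP : ∀ u, P u = (∑ i, Real.exp (-a i * u / A i) / (1 - Real.exp (-u / A i))) -
      ∑ j, Real.exp (-b j * u / B j) / (1 - Real.exp (-u / B j))) :
    (CompletelyMonotonicOn (deriv (deriv (fun y => Real.log (W y)))) ↔
        ∀ u > (0 : ℝ), 0 ≤ P u) ∧
      ((∀ u > (0 : ℝ), 0 ≤ P u) → ∀ x > (0 : ℝ),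
        deriv (deriv (fun y => Real.log (W y))) x =
          ∫ u in Set.Ioi (0 : ℝ), Real.exp (-x * u) * u * P u) := by
  have h := stmt6_general (Sum.elim A B) (Sum.elim a b) (Sum.elim 1 (-1))
    (Sum.forall.2 ⟨hA, hB⟩) (Sum.forall.2 ⟨ha, hb⟩) W
    (fun x _ => by simp [hW, Real.rpow_neg_one, div_eq_mul_inv])
    P (fun u _ => by simp [hP, sub_eq_add_neg])
  exact ⟨h.1, fun _ => h.2⟩
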